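/- Let L be a polar space and f : L → ℝ ∪ {∞}. Then f satisfies f(p) + f(q) ≥ f(p ∧ q) + (1/2) f(p ∨_L q) + (1/2) f(p ∨_R q) for all p, q ∈ L if and only if f satisfies f(p) + f(q) ≥ f(p ∧ q) + f(p ⊔ q) for all p, q ∈ L, where p ⊔ q := (p ∨_L q) ∧ (p ∨_R q). -/

import Mathlib

/-!
Everything is elementary arithmetic once the right pairs are substituted into the two inequalities.
Write `l = p ∨_L q`, `r = p ∨_R q`, `s = p ⊔ q = l ∧ r`.

From the fractional join to the pseudo join: the pair `(l, r)` has meet `s` and is fixed by the two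
joins, so its inequality reads `f l + f r ≥ f s + ½ f l + ½ f r`, that is `½ f l + ½ f r ≥ f s`;
substitute this in the inequality for `(p, q)`.

From the pseudo join to the fractional join: since `p ⊔ s = l` and `q ⊔ s = r`, the pairs `(p, s)`
and `(q, s)` give upper bounds for `f l` and `f r`. The pair `(p ∧ s, q ∧ s)` has meet `p ∧ q` and
pseudo join `s`. Adding these three inequalities and that of `(p, q)` itself
yields `2 f p + 2 f q ≥ 2 f (p ∧ q) + f l + f r` after cancellation.

The value `∞` is harmless: if `f p` and `f q` are finite, the assumed inequalities force every other
value that occurs to be finite, so the cancellations take place in `ℝ`.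
-/

theorem ne_top_of_add_le_coe {x y : EReal} {c : ℝ} (hx : x ≠ ⊥) (hy : y ≠ ⊥)
    (h : x + y ≤ (c : EReal)) : x ≠ ⊤ ∧ y ≠ ⊤ := by
  constructor
  · rintro rfl
    rw [EReal.top_add_of_ne_bot hy] at h
    exact EReal.coe_ne_top c (top_le_iff.mp h)
  · rintro rfl
    rw [EReal.add_top_of_ne_bot hx] at h
    exact EReal.coe_ne_top c (top_le_iff.mp h)

theorem half_mul_ne_bot {x : EReal} (hx : x ≠ ⊥) : ((1 / 2 : ℝ) : EReal) * x ≠ ⊥ := by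
  induction x with
  | bot => exact absurd rfl hx
  | top => rw [EReal.coe_mul_top_of_pos (by norm_num)]; exact top_ne_bot
  | coe x => rw [← EReal.coe_mul]; exact EReal.coe_ne_bot _

theorem ne_top_of_half_mul_ne_top {x : EReal} (h : ((1 / 2 : ℝ) : EReal) * x ≠ ⊤) : x ≠ ⊤ := by
  rintro rfl
  exact h (EReal.coe_mul_top_of_pos (by norm_num))

/-- The arithmetic of the step from the fractional join to the pseudo join: `m`, `s`, `l`, `r` are
the values at the meet, the pseudo join, the left join and the right join. -/
theorem add_ge_of_fractional {a b m s l r : EReal}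
    (ha : a ≠ ⊥) (hb : b ≠ ⊥) (hm : m ≠ ⊥) (hs : s ≠ ⊥) (hl : l ≠ ⊥) (hr : r ≠ ⊥)
    (h : a + b ≥ m + ((1 / 2 : ℝ) : EReal) * l + ((1 / 2 : ℝ) : EReal) * r)
    (h' : l + r ≥ s + ((1 / 2 : ℝ) : EReal) * l + ((1 / 2 : ℝ) : EReal) * r) :
    a + b ≥ m + s := by
  by_cases hat : a = ⊤
  · rw [hat, EReal.top_add_of_ne_bot hb]; exact le_top
  by_cases hbt : b = ⊤
  · rw [hbt, EReal.add_top_of_ne_bot ha]; exact le_top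
  lift a to ℝ using ⟨hat, ha⟩
  lift b to ℝ using ⟨hbt, hb⟩
  rw [← EReal.coe_add] at h
  have hml := EReal.add_ne_bot_iff.mpr ⟨hm, half_mul_ne_bot hl⟩
  obtain ⟨hmlt, hrt⟩ := ne_top_of_add_le_coe hml (half_mul_ne_bot hr) h
  lift r to ℝ using ⟨ne_top_of_half_mul_ne_top hrt, hr⟩
  have hmt : m ≠ ⊤ := by
    rintro rfl
    exact hmlt (EReal.top_add_of_ne_bot (half_mul_ne_bot hl))
  lift m to ℝ using ⟨hmt, hm⟩
  have hlt : l ≠ ⊤ := by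
    rintro rfl
    apply hmlt
    rw [EReal.coe_mul_top_of_pos (by norm_num), EReal.coe_add_top]
  lift l to ℝ using ⟨hlt, hl⟩
  have hst : s ≠ ⊤ := by
    rintro rfl
    rw [← EReal.coe_mul, ← EReal.coe_mul, ← EReal.coe_add, EReal.top_add_coe,
      EReal.top_add_coe] at h'
    exact EReal.coe_ne_top _ (top_le_iff.mp h')
  lift s to ℝ using ⟨hst, hs⟩
  norm_cast at h h' ⊢
  linarith

/-- The arithmetic of the step from the pseudo join to the fractional join: `m`, `s`, `l`, `r` are
as in `add_ge_of_fractional`, while `u` and `v` are the values at `p ∧ s` and `q ∧ s`. -/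
theorem add_ge_of_pseudo {a b m s l r u v : EReal}
    (ha : a ≠ ⊥) (hb : b ≠ ⊥) (hm : m ≠ ⊥) (hs : s ≠ ⊥) (hl : l ≠ ⊥) (hr : r ≠ ⊥)
    (hu : u ≠ ⊥) (hv : v ≠ ⊥)
    (h : a + b ≥ m + s) (h₁ : a + s ≥ u + l) (h₂ : b + s ≥ v + r) (h₃ : u + v ≥ m + s) :
    a + b ≥ m + ((1 / 2 : ℝ) : EReal) * l + ((1 / 2 : ℝ) : EReal) * r := by
  by_cases hat : a = ⊤
  · rw [hat, EReal.top_add_of_ne_bot hb]; exact le_top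
  by_cases hbt : b = ⊤
  · rw [hbt, EReal.add_top_of_ne_bot ha]; exact le_top
  lift a to ℝ using ⟨hat, ha⟩
  lift b to ℝ using ⟨hbt, hb⟩
  rw [← EReal.coe_add] at h
  obtain ⟨hmt, hst⟩ := ne_top_of_add_le_coe hm hs h
  lift m to ℝ using ⟨hmt, hm⟩
  lift s to ℝ using ⟨hst, hs⟩
  rw [← EReal.coe_add] at h₁ h₂
  obtain ⟨hut, hlt⟩ := ne_top_of_add_le_coe hu hl h₁
  obtain ⟨hvt, hrt⟩ := ne_top_of_add_le_coe hv hr h₂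
  lift u to ℝ using ⟨hut, hu⟩
  lift l to ℝ using ⟨hlt, hl⟩
  lift v to ℝ using ⟨hvt, hv⟩
  lift r to ℝ using ⟨hrt, hr⟩
  norm_cast at h h₁ h₂ h₃ ⊢
  linarith


/-- Let `L` be a polar space with meet `⊓`, left join `veeL`, right join `veeR`, and pseudo
join `sq p q = (veeL p q) ⊓ (veeR p q)`, satisfying the key identities of polar spaces.
Then for `f : L → ℝ ∪ {∞}` (modelled as `EReal`-valued, never `⊥`), submodularity via the
fractional join, `f p + f q ≥ f (p ⊓ q) + ½ f (p ∨_L q) + ½ f (p ∨_R q)`, is equivalent to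
submodularity via the pseudo join, `f p + f q ≥ f (p ⊓ q) + f (p ⊔ q)`. -/
theorem stmt5 {L : Type*} [SemilatticeInf L] (veeL veeR sq : L → L → L)
    (hsq : ∀ p q : L, sq p q = veeL p q ⊓ veeR p q)
    (hjoin : ∀ p q : L, IsLUB {p, q} (veeL p q) → sq p q = veeL p q ∧ veeR p q = veeL p q)
    (h1 : ∀ p q : L, veeL (veeL p q) (veeR p q) = veeL p q)
    (h2 : ∀ p q : L, veeR (veeL p q) (veeR p q) = veeR p q)
    (h3 : ∀ p q : L, sq (veeL p q) (veeR p q) = sq p q)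
    (h4 : ∀ p q : L, sq (p ⊓ veeR p q) (q ⊓ veeL p q) = sq p q)
    (h5 : ∀ p q : L, (p ⊓ veeR p q) ⊓ (q ⊓ veeL p q) = p ⊓ q)
    (h6 : ∀ p q : L, sq p (sq p q) = veeL p q)
    (h7 : ∀ p q : L, sq q (sq p q) = veeR p q)
    (h8 : ∀ p q : L, p ⊓ sq p q = p ⊓ veeR p q)
    (h9 : ∀ p q : L, q ⊓ sq p q = q ⊓ veeL p q)
    (f : L → EReal) (hf : ∀ x : L, f x ≠ ⊥) :
    (∀ p q : L, f p + f q ≥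
      f (p ⊓ q) + ((1 / 2 : ℝ) : EReal) * f (veeL p q) + ((1 / 2 : ℝ) : EReal) * f (veeR p q)) ↔
    (∀ p q : L, f p + f q ≥ f (p ⊓ q) + f (sq p q)) := by
  constructor
  · intro H p q
    have h := H (veeL p q) (veeR p q)
    rw [h1, h2, ← hsq] at h
    exact add_ge_of_fractional (hf _) (hf _) (hf _) (hf _) (hf _) (hf _) (H p q) h
  · intro H p q
    have hp := H p (sq p q)
    have hq := H q (sq p q)
    have hpq := H (p ⊓ veeR p q) (q ⊓ veeL p q)
    rw [h6, h8] at hp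
    rw [h7, h9] at hq
    rw [h4, h5] at hpq
    exact add_ge_of_pseudo (hf _) (hf _) (hf _) (hf _) (hf _) (hf _) (hf _) (hf _)
      (H p q) hp hq hpq
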